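/- Let G be a finite simple graph with every vertex of degree at least 1, with adjacency matrix A and diagonal degree matrix D, and let Ã = D^{-1/2} A D^{-1/2} be the symmetrically normalized adjacency matrix. Let W be an H×H real matrix with ‖W‖₂ < 1, V an F×H real matrix, and X an N×F real matrix (where N = |V(G)|). Then the reservoir map Φ(M) = tanh(Ã M W + X V) is a contraction with constant K = ρ(Ã)·‖W‖₂ < 1, and hence it has a unique fixed point in ℝ^{N×H}. -/

import Mathlib

noncomputable def frobNorm {m n : Type*} [Fintype m] [Fintype n]
    (M : Matrix m n ℝ) : ℝ :=
  Real.sqrt (∑ i, ∑ j, (M i j) ^ 2)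

noncomputable def specNorm {m n : ℕ} (M : Matrix (Fin m) (Fin n) ℝ) : ℝ :=
  ‖LinearMap.toContinuousLinearMap (Matrix.toEuclideanLin M)‖

noncomputable def specRad {n : ℕ} (A : Matrix (Fin n) (Fin n) ℝ)
    (hA : A.IsHermitian) : ℝ :=
  ⨆ i, |hA.eigenvalues i|

noncomputable def mtanh {m n : Type*} (M : Matrix m n ℝ) : Matrix m n ℝ :=
  Matrix.of fun i j => Real.tanh (M i j)

noncomputable def resMap {N F Hd : ℕ} (Atil : Matrix (Fin N) (Fin N) ℝ)
    (W : Matrix (Fin Hd) (Fin Hd) ℝ) (V : Matrix (Fin F) (Fin Hd) ℝ)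
    (X : Matrix (Fin N) (Fin F) ℝ) (M : Matrix (Fin N) (Fin Hd) ℝ) :
    Matrix (Fin N) (Fin Hd) ℝ :=
  mtanh (Atil * M * W + X * V)

/-- The symmetrically normalized adjacency matrix D^{-1/2} A D^{-1/2} of a
finite simple graph with minimum degree ≥ 1. -/
noncomputable def normAdj {N : ℕ} (G : SimpleGraph (Fin N)) [DecidableRel G.Adj] :
    Matrix (Fin N) (Fin N) ℝ :=
  Matrix.diagonal (fun i => (Real.sqrt (G.degree i))⁻¹) * G.adjMatrix ℝ
    * Matrix.diagonal (fun i => (Real.sqrt (G.degree i))⁻¹)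

/-!
Since `tanh` is 1-Lipschitz and `‖Ã M W‖_F ≤ ‖Ã‖₂ ‖M‖_F ‖W‖₂`, the reservoir map is Lipschitz with
constant `‖Ã‖₂ ‖W‖₂`, and `‖Ã‖₂ = ρ(Ã)` because `Ã` is symmetric. The bound `‖Ã‖₂ ≤ 1` is a Schur
test: Cauchy–Schwarz on row `i` gives `(Ãx)ᵢ² ≤ ∑ⱼ aᵢⱼ xⱼ² / dⱼ`, and summing over `i` recovers at
most `∑ⱼ xⱼ²`. Banach's fixed point theorem concludes.
-/

lemma hasDerivAt_real_tanh (x : ℝ) : HasDerivAt Real.tanh (1 / Real.cosh x ^ 2) x := by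
  have hquot := (Real.hasDerivAt_sinh x).fun_div (Real.hasDerivAt_cosh x) (Real.cosh_pos x).ne'
  simpa only [← Real.tanh_eq_sinh_div_cosh, ← sq, Real.cosh_sq_sub_sinh_sq] using hquot

lemma lipschitzWith_one_real_tanh : LipschitzWith 1 Real.tanh := by
  refine lipschitzWith_of_nnnorm_deriv_le (fun x => (hasDerivAt_real_tanh x).differentiableAt)
    fun x => ?_
  have hderiv : ‖1 / Real.cosh x ^ 2‖ ≤ 1 := by
    rw [Real.norm_of_nonneg (by positivity)]
    exact div_le_one_of_le₀ (one_le_pow₀ (Real.one_le_cosh x)) (by positivity)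
  rwa [(hasDerivAt_real_tanh x).deriv, ← NNReal.coe_le_coe]

section FrobeniusNorm

variable {m n p : Type*} [Fintype m] [Fintype n] [Fintype p]

lemma frobNorm_nonneg (M : Matrix m n ℝ) : 0 ≤ frobNorm M := Real.sqrt_nonneg _

lemma frobNorm_sq (M : Matrix m n ℝ) : frobNorm M ^ 2 = ∑ i, ∑ j, M i j ^ 2 :=
  Real.sq_sqrt (by positivity)

open scoped Matrix.Norms.Frobenius in
lemma frobNorm_eq_frobenius_norm (M : Matrix m n ℝ) : frobNorm M = ‖M‖ := by
  simp [Matrix.frobenius_norm_def, frobNorm, Real.sqrt_eq_rpow]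

lemma frobNorm_transpose (M : Matrix m n ℝ) : frobNorm M.transpose = frobNorm M := by
  simp only [frobNorm, Matrix.transpose_apply]
  rw [Finset.sum_comm]

lemma frobNorm_map_sub_map_le {K : NNReal} {f : ℝ → ℝ} (hf : LipschitzWith K f)
    (M N : Matrix m n ℝ) : frobNorm (M.map f - N.map f) ≤ K * frobNorm (M - N) := by
  refine le_of_sq_le_sq ?_ (mul_nonneg K.2 (frobNorm_nonneg _))
  simp only [mul_pow, frobNorm_sq, Finset.mul_sum]
  gcongr with i _ j
  rw [← mul_pow]
  refine sq_le_sq.mpr ?_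
  rw [abs_mul, NNReal.abs_eq]
  exact hf.dist_le_mul (M i j) (N i j)

lemma frobNorm_mtanh_sub_mtanh_le (M N : Matrix m n ℝ) :
    frobNorm (mtanh M - mtanh N) ≤ frobNorm (M - N) :=
  (frobNorm_map_sub_map_le lipschitzWith_one_real_tanh M N).trans_eq (one_mul _)

open scoped Matrix.Norms.Frobenius in
lemma existsUnique_fixedPoint_of_frobNorm_sub_le {f : Matrix m n ℝ → Matrix m n ℝ} {K : ℝ}
    (hK : K < 1) (hf : ∀ M N, frobNorm (f M - f N) ≤ K * frobNorm (M - N)) :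
    ∃! M, f M = M := by
  have : CompleteSpace (Matrix m n ℝ) := FiniteDimensional.complete ℝ _
  have hcontr : ContractingWith K.toNNReal f := by
    refine ⟨Real.toNNReal_lt_one.mpr hK, LipschitzWith.of_dist_le' fun M N => ?_⟩
    simpa only [dist_eq_norm, frobNorm_eq_frobenius_norm] using hf M N
  exact ⟨hcontr.fixedPoint f, hcontr.fixedPoint_isFixedPt,
    fun _ hM => hcontr.fixedPoint_unique hM⟩

end FrobeniusNorm

/-- The scaling `R^{-1/2} A C^{-1/2}` of a matrix `A` by the diagonal matrices `R` and `C` of its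
row and column sums. It extends the normalized adjacency matrix to arbitrary, possibly rectangular
matrices; since `0⁻¹ = 0`, rows and columns with sum zero are scaled to zero. -/
noncomputable def sqrtNormalized {m n : Type*} [Fintype m] [Fintype n] [DecidableEq m]
    [DecidableEq n] (A : Matrix m n ℝ) : Matrix m n ℝ :=
  Matrix.diagonal (fun i => (√(∑ j, A i j))⁻¹) * A
    * Matrix.diagonal (fun j => (√(∑ i, A i j))⁻¹)

-- Cauchy–Schwarz for the splitting of the `j`-th term into factors with squares `a j / ∑ k, a k`
-- and `a j * (x j ^ 2 / c j)`, the former having total mass at most one.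
lemma sq_sum_inv_sqrt_mul_le {ι : Type*} [Fintype ι] {a c : ι → ℝ} (x : ι → ℝ)
    (ha : ∀ j, 0 ≤ a j) (hc : ∀ j, 0 ≤ c j) :
    (∑ j, (√(∑ k, a k))⁻¹ * a j * (√(c j))⁻¹ * x j) ^ 2 ≤ ∑ j, a j * (x j ^ 2 / c j) := by
  have hsum : 0 ≤ ∑ k, a k := Finset.sum_nonneg fun k _ => ha k
  have hterm (j : ι) : 0 ≤ a j * (x j ^ 2 / c j) :=
    mul_nonneg (ha j) (div_nonneg (sq_nonneg _) (hc j))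
  calc (∑ j, (√(∑ k, a k))⁻¹ * a j * (√(c j))⁻¹ * x j) ^ 2
      ≤ (∑ j, a j / ∑ k, a k) * ∑ j, a j * (x j ^ 2 / c j) := by
        refine Finset.sum_sq_le_sum_mul_sum_of_sq_le_mul _
          (fun j _ => div_nonneg (ha j) hsum) (fun j _ => hterm j) fun j _ => le_of_eq ?_
        simp only [mul_pow, inv_pow, Real.sq_sqrt hsum, Real.sq_sqrt (hc j)]
        ring
    _ ≤ ∑ j, a j * (x j ^ 2 / c j) := by
        rw [← Finset.sum_div]
        exact mul_le_of_le_one_left (Finset.sum_nonneg fun j _ => hterm j) (div_self_le_one _)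

section OperatorNorm

open scoped Matrix.Norms.L2Operator

variable {m n p : Type*} [Fintype m] [Fintype n] [Fintype p] [DecidableEq n]

lemma sum_mulVec_sq_le_l2_opNorm_sq_mul (A : Matrix m n ℝ) (x : n → ℝ) :
    ∑ i, A.mulVec x i ^ 2 ≤ ‖A‖ ^ 2 * ∑ j, x j ^ 2 := by
  have hsq := pow_le_pow_left₀ (norm_nonneg _) (A.l2_opNorm_mulVec (WithLp.toLp 2 x)) 2
  simpa [mul_pow, EuclideanSpace.real_norm_sq_eq] using hsq

lemma frobNorm_mul_le_l2_opNorm_mul (A : Matrix m n ℝ) (M : Matrix n p ℝ) :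
    frobNorm (A * M) ≤ ‖A‖ * frobNorm M := by
  refine le_of_sq_le_sq ?_ (mul_nonneg (norm_nonneg A) (frobNorm_nonneg M))
  rw [mul_pow, frobNorm_sq, frobNorm_sq, Finset.sum_comm, Finset.sum_comm (γ := n), Finset.mul_sum]
  gcongr with j
  exact sum_mulVec_sq_le_l2_opNorm_sq_mul A fun i => M i j

lemma frobNorm_mul_le_mul_l2_opNorm (M : Matrix p m ℝ) (B : Matrix m n ℝ) :
    frobNorm (M * B) ≤ frobNorm M * ‖B‖ := by
  classical
  have hB : ‖B.transpose‖ = ‖B‖ := by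
    rw [← Matrix.conjTranspose_eq_transpose_of_trivial, Matrix.l2_opNorm_conjTranspose]
  calc frobNorm (M * B) = frobNorm (B.transpose * M.transpose) := by
        rw [← Matrix.transpose_mul, frobNorm_transpose]
    _ ≤ ‖B.transpose‖ * frobNorm M.transpose := frobNorm_mul_le_l2_opNorm_mul _ _
    _ = frobNorm M * ‖B‖ := by rw [hB, frobNorm_transpose, mul_comm]

lemma l2_opNorm_le_of_sum_mulVec_sq_le {A : Matrix m n ℝ} {C : ℝ} (hC : 0 ≤ C)
    (h : ∀ x : n → ℝ, ∑ i, A.mulVec x i ^ 2 ≤ C ^ 2 * ∑ j, x j ^ 2) : ‖A‖ ≤ C := by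
  rw [Matrix.l2_opNorm_def]
  refine ContinuousLinearMap.opNorm_le_bound _ hC fun x => ?_
  refine le_of_sq_le_sq ?_ (mul_nonneg hC (norm_nonneg x))
  simpa [mul_pow, EuclideanSpace.real_norm_sq_eq] using h x

lemma l2_opNorm_sqrtNormalized_le_one [DecidableEq m] {A : Matrix m n ℝ}
    (hA : ∀ i j, 0 ≤ A i j) : ‖sqrtNormalized A‖ ≤ 1 := by
  have hcol (j : n) : 0 ≤ ∑ i, A i j := Finset.sum_nonneg fun i _ => hA i j
  refine l2_opNorm_le_of_sum_mulVec_sq_le zero_le_one fun x => ?_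
  calc ∑ i, (sqrtNormalized A).mulVec x i ^ 2
      = ∑ i, (∑ j, (√(∑ l, A i l))⁻¹ * A i j * (√(∑ k, A k j))⁻¹ * x j) ^ 2 := by
        simp only [sqrtNormalized, Matrix.mulVec, dotProduct, Matrix.mul_diagonal,
          Matrix.diagonal_mul]
    _ ≤ ∑ i, ∑ j, A i j * (x j ^ 2 / ∑ k, A k j) :=
        Finset.sum_le_sum fun i _ => sq_sum_inv_sqrt_mul_le x (hA i) hcol
    _ = ∑ j, (∑ k, A k j) / (∑ k, A k j) * x j ^ 2 := by
        rw [Finset.sum_comm]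
        refine Finset.sum_congr rfl fun j _ => ?_
        rw [← Finset.sum_mul]
        ring
    _ ≤ 1 ^ 2 * ∑ j, x j ^ 2 := by
        rw [one_pow, one_mul]
        exact Finset.sum_le_sum fun j _ =>
          mul_le_of_le_one_left (sq_nonneg _) (div_self_le_one _)

lemma specNorm_eq_l2_opNorm {k l : ℕ} (A : Matrix (Fin k) (Fin l) ℝ) : specNorm A = ‖A‖ := rfl

lemma specRad_eq_specNorm {k : ℕ} {A : Matrix (Fin k) (Fin k) ℝ} (hA : A.IsHermitian) :
    specRad A hA = specNorm A := by
  have hdiag : ‖A‖ = ‖hA.eigenvalues‖ := by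
    conv_lhs => rw [hA.spectral_theorem, Unitary.conjStarAlgAut_apply, ← Unitary.coe_star,
      CStarRing.norm_mul_coe_unitary, CStarRing.norm_coe_unitary_mul, Matrix.l2_opNorm_diagonal]
    rfl
  rw [specNorm_eq_l2_opNorm, hdiag]
  refine le_antisymm (Real.iSup_le (norm_le_pi_norm hA.eigenvalues) (norm_nonneg _)) ?_
  exact (pi_norm_le_iff_of_nonneg (Real.iSup_nonneg fun _ => abs_nonneg _)).mpr
    (le_ciSup (Set.finite_range fun i => |hA.eigenvalues i|).bddAbove)

end OperatorNorm

section NormalizedAdjacency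

variable {N : ℕ} (G : SimpleGraph (Fin N)) [DecidableRel G.Adj]

lemma isHermitian_normAdj : (normAdj G).IsHermitian := by
  simpa only [normAdj, Matrix.diagonal_conjTranspose, star_trivial] using
    Matrix.isHermitian_mul_mul_conjTranspose
      (Matrix.diagonal fun i => (√(G.degree i : ℝ))⁻¹) (G.isHermitian_adjMatrix ℝ)

lemma normAdj_eq_sqrtNormalized_adjMatrix : normAdj G = sqrtNormalized (G.adjMatrix ℝ) := by
  have hrow (i : Fin N) : ∑ j, G.adjMatrix ℝ i j = G.degree i := by
    simpa [Matrix.mulVec, dotProduct] using G.adjMatrix_mulVec_const_apply (a := (1 : ℝ)) (v := i)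
  have hcol (j : Fin N) : ∑ i, G.adjMatrix ℝ i j = G.degree j := by
    rw [← hrow j]
    exact Finset.sum_congr rfl fun i _ => G.isSymm_adjMatrix.apply j i
  simp only [normAdj, sqrtNormalized, hrow, hcol]

lemma specNorm_normAdj_le_one : specNorm (normAdj G) ≤ 1 := by
  rw [normAdj_eq_sqrtNormalized_adjMatrix, specNorm_eq_l2_opNorm]
  refine l2_opNorm_sqrtNormalized_le_one fun i j => ?_
  rw [SimpleGraph.adjMatrix_apply]
  positivity

end NormalizedAdjacency

lemma frobNorm_resMap_sub_resMap_le {N F Hd : ℕ} (A : Matrix (Fin N) (Fin N) ℝ)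
    (W : Matrix (Fin Hd) (Fin Hd) ℝ) (V : Matrix (Fin F) (Fin Hd) ℝ)
    (X : Matrix (Fin N) (Fin F) ℝ) (H Z : Matrix (Fin N) (Fin Hd) ℝ) :
    frobNorm (resMap A W V X H - resMap A W V X Z)
      ≤ specNorm A * specNorm W * frobNorm (H - Z) :=
  calc frobNorm (resMap A W V X H - resMap A W V X Z)
      ≤ frobNorm ((A * H * W + X * V) - (A * Z * W + X * V)) :=
        frobNorm_mtanh_sub_mtanh_le _ _
    _ = frobNorm (A * (H - Z) * W) := by
        rw [add_sub_add_right_eq_sub, Matrix.mul_sub, Matrix.sub_mul]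
    _ ≤ frobNorm (A * (H - Z)) * specNorm W := frobNorm_mul_le_mul_l2_opNorm _ _
    _ ≤ specNorm A * frobNorm (H - Z) * specNorm W :=
        mul_le_mul_of_nonneg_right (frobNorm_mul_le_l2_opNorm_mul _ _) (norm_nonneg _)
    _ = specNorm A * specNorm W * frobNorm (H - Z) := by ring

/-- If ‖W‖₂ < 1 then the reservoir map on the normalized adjacency matrix is a
contraction with constant K = ρ(Ã)·‖W‖₂ < 1, hence has a unique fixed point. -/
theorem reservoir_normAdj_contraction_uniqueFixedPoint {N F Hd : ℕ}
    (G : SimpleGraph (Fin N)) [DecidableRel G.Adj]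
    (hdeg : ∀ v, 1 ≤ G.degree v)
    (W : Matrix (Fin Hd) (Fin Hd) ℝ) (hW : specNorm W < 1)
    (V : Matrix (Fin F) (Fin Hd) ℝ) (X : Matrix (Fin N) (Fin F) ℝ) :
    ∃ hA : (normAdj G).IsHermitian,
      (∀ H Z : Matrix (Fin N) (Fin Hd) ℝ,
        frobNorm (resMap (normAdj G) W V X H - resMap (normAdj G) W V X Z)
          ≤ specRad (normAdj G) hA * specNorm W * frobNorm (H - Z)) ∧
      specRad (normAdj G) hA * specNorm W < 1 ∧
      ∃! Hstar : Matrix (Fin N) (Fin Hd) ℝ,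
        resMap (normAdj G) W V X Hstar = Hstar := by
  have hA : (normAdj G).IsHermitian := isHermitian_normAdj G
  have hK : specNorm (normAdj G) * specNorm W < 1 :=
    (mul_le_of_le_one_left (norm_nonneg _) (specNorm_normAdj_le_one G)).trans_lt hW
  rw [← specRad_eq_specNorm hA] at hK
  have hcontr := frobNorm_resMap_sub_resMap_le (normAdj G) W V X
  rw [← specRad_eq_specNorm hA] at hcontr
  exact ⟨hA, hcontr, hK, existsUnique_fixedPoint_of_frobNorm_sub_le hK hcontr⟩
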